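/- For every natural number m and all real numbers q and A with q > 0, q ≠ 1 and A ≠ 0, the real-valued identity F̄_m(q, A) = A^{−8} · F_m(q^{−1}, A^{−1}) holds, and consequently 1 + P(q^{−1}, A^{−1}) · F_m(q^{−1}, A^{−1}) = 1 + P(q, A) · F̄_m(q, A). In other words, the candidate HOMFLY-PT polynomial built from F̄_m is obtained from the one built from F_m by the mirror transformation (q, A) ↦ (q^{−1}, A^{−1}), so the hypothetical knots K̄_m are the mirror images of the knots K_m. -/

import Mathlib

/-- The real quantum integer `[n]_q = (q^n − q^{−n})/(q − q^{−1})`. -/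
noncomputable def qint (q : ℝ) (n : ℤ) : ℝ := (q ^ n - q ^ (-n)) / (q - q⁻¹)

/-- `φ_{2j}(q) = −[2j+4]_q[j+3]_q[j+1]_q/([3]_q[4]_q)`. -/
noncomputable def φc (q : ℝ) (j : ℕ) : ℝ :=
  -(qint q (2 * j + 4) * qint q (j + 3) * qint q (j + 1)) / (qint q 3 * qint q 4)

/-- `P(q, A) = (A² − q²)(A² − q⁴)(A² − q^{−2})(A² − q^{−4})`. -/
noncomputable def Pr (q A : ℝ) : ℝ :=
  (A ^ 2 - q ^ 2) * (A ^ 2 - q ^ 4) * (A ^ 2 - q ^ (-2 : ℤ)) * (A ^ 2 - q ^ (-4 : ℤ))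

/-- `F̄_m(q, A) = Σ_{j=0}^m φ_{2j}(q) A^{2j}`. -/
noncomputable def Fbar (m : ℕ) (q A : ℝ) : ℝ :=
  ∑ j ∈ Finset.range (m + 1), φc q j * A ^ (2 * j)

/-- `F_m(q, A) = Σ_{j=0}^m φ_{2j}(q) A^{−2j−8}`. -/
noncomputable def Fm (m : ℕ) (q A : ℝ) : ℝ :=
  ∑ j ∈ Finset.range (m + 1), φc q j * A ^ (-(2 * (j : ℤ)) - 8)

/-!
Each `φ_{2j}` and `P` is invariant under `q ↦ q⁻¹`, so only the effect of `A ↦ A⁻¹` matters.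
It turns `F_m` into `A ^ 8 * F̄_m`, while `P` is a product of two self-reciprocal quadratics
`a ^ 2 - (x + x⁻¹) * a + 1` in `a = A ^ 2` and so picks up the compensating factor `A ^ (-8)`.
-/

lemma qint_inv (q : ℝ) (n : ℤ) : qint q⁻¹ n = qint q n := by
  rw [qint, qint, inv_zpow', inv_zpow', inv_inv, neg_neg, ← neg_sub (q ^ n), ← neg_sub q,
    neg_div_neg_eq]

lemma φc_inv (q : ℝ) (j : ℕ) : φc q⁻¹ j = φc q j := by
  simp only [φc, qint_inv]

lemma Fm_inv_left (m : ℕ) (q A : ℝ) : Fm m q⁻¹ A = Fm m q A := by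
  simp only [Fm, φc_inv]

lemma Fm_inv_right (m : ℕ) (q : ℝ) {A : ℝ} (hA : A ≠ 0) :
    Fm m q A⁻¹ = A ^ (8 : ℤ) * Fbar m q A := by
  rw [Fm, Fbar, Finset.mul_sum]
  refine Finset.sum_congr rfl fun j _ => ?_
  have hpow : A⁻¹ ^ (-(2 * (j : ℤ)) - 8) = A ^ (8 : ℤ) * A ^ (2 * j) := by
    rw [inv_zpow', ← zpow_natCast A (2 * j), ← zpow_add₀ hA]
    congr 1
    push_cast
    ring
  rw [hpow, mul_left_comm]

lemma Pr_eq_mul (q A : ℝ) :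
    Pr q A = ((A ^ 2 - q ^ 2) * (A ^ 2 - (q ^ 2)⁻¹)) *
      ((A ^ 2 - q ^ 4) * (A ^ 2 - (q ^ 4)⁻¹)) := by
  have h2 : q ^ (-2 : ℤ) = (q ^ 2)⁻¹ := zpow_neg_coe_of_pos q two_pos
  have h4 : q ^ (-4 : ℤ) = (q ^ 4)⁻¹ := zpow_neg_coe_of_pos q four_pos
  rw [Pr, h2, h4]
  ring

lemma Pr_inv_left (q A : ℝ) : Pr q⁻¹ A = Pr q A := by
  simp only [Pr_eq_mul, inv_pow, inv_inv]
  ring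

lemma inv_sub_mul_inv_sub_inv {K : Type*} [Field K] {a x : K} (ha : a ≠ 0) (hx : x ≠ 0) :
    (a⁻¹ - x) * (a⁻¹ - x⁻¹) = (a ^ 2)⁻¹ * ((a - x) * (a - x⁻¹)) := by
  field_simp
  ring

lemma Pr_inv_right {q A : ℝ} (hq : q ≠ 0) (hA : A ≠ 0) :
    Pr q A⁻¹ = A ^ (-8 : ℤ) * Pr q A := by
  have hA2 : A ^ 2 ≠ 0 := pow_ne_zero 2 hA
  have h8 : A ^ (-8 : ℤ) = ((A ^ 2) ^ 2)⁻¹ * ((A ^ 2) ^ 2)⁻¹ := by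
    rw [zpow_neg, ← mul_inv]
    norm_cast
    ring
  rw [Pr_eq_mul, Pr_eq_mul, inv_pow, inv_sub_mul_inv_sub_inv hA2 (pow_ne_zero 2 hq),
    inv_sub_mul_inv_sub_inv hA2 (pow_ne_zero 4 hq), h8, mul_mul_mul_comm]

-- At `|q| = 1` the denominator `q - q⁻¹` of `qint` vanishes, so `qint` takes the junk value `0`.
theorem stmt7_general (m : ℕ) (q A : ℝ) (hq : q ≠ 0) (_hq1 : |q| ≠ 1) (hA : A ≠ 0) :
    Fbar m q A = A ^ (-8 : ℤ) * Fm m q⁻¹ A⁻¹ ∧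
    1 + Pr q⁻¹ A⁻¹ * Fm m q⁻¹ A⁻¹ = 1 + Pr q A * Fbar m q A := by
  have hF : Fbar m q A = A ^ (-8 : ℤ) * Fm m q⁻¹ A⁻¹ := by
    rw [Fm_inv_left, Fm_inv_right m q hA, zpow_neg, inv_mul_cancel_left₀ (zpow_ne_zero 8 hA)]
  have hP : Pr q⁻¹ A⁻¹ = A ^ (-8 : ℤ) * Pr q A := by
    rw [Pr_inv_left, Pr_inv_right hq hA]
  refine ⟨hF, ?_⟩
  rw [hF, hP, mul_left_comm, mul_assoc]

/-- The mirror relation: `F̄_m(q, A) = A^{−8}·F_m(q^{−1}, A^{−1})`, hence the candidate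
HOMFLY-PT polynomial built from `F̄_m` is the mirror image `(q, A) ↦ (q^{−1}, A^{−1})`
of the one built from `F_m`. -/
theorem stmt7 (m : ℕ) (q A : ℝ) (hq : 0 < q) (hq1 : q ≠ 1) (hA : A ≠ 0) :
    Fbar m q A = A ^ (-8 : ℤ) * Fm m q⁻¹ A⁻¹ ∧
    1 + Pr q⁻¹ A⁻¹ * Fm m q⁻¹ A⁻¹ = 1 + Pr q A * Fbar m q A :=
  stmt7_general m q A hq.ne' (by rwa [abs_of_pos hq]) hA
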